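/- Let d ≥ 1 and t > 0. For every Borel probability measure μ on S^d, the Gaussian energy satisfies I_{G_t}[μ] ≥ e^{−2t} · ₀F₁(;(d+1)/2; t²), with equality if and only if μ = σ_d (as measures on the Borel subsets of S^d). -/

import Mathlib

open MeasureTheory Real Filter Metric
open scoped RealInnerProductSpace ENNReal Topology BigOperators

noncomputable section

/-- `ℝ^n` as a Euclidean space. -/
abbrev Euc (n : ℕ) : Type := EuclideanSpace ℝ (Fin n)

/-- The unit sphere in `ℝ^m`; the sphere `S^d` of the informal statement is `Sph (d+1)`. -/
abbrev Sph (m : ℕ) := Metric.sphere (0 : Euc m) 1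

/-- The uniform (normalized surface-area) probability measure on the unit sphere of `ℝ^m`. -/
noncomputable def unifSphere (m : ℕ) : Measure (Sph m) :=
  ((volume : Measure (Euc m)).toSphere Set.univ)⁻¹ • (volume : Measure (Euc m)).toSphere

/-- Gaussian energy `I_{G_t}[μ] = ∫∫ exp(−t‖u−v‖²) dμ dμ` of a measure on the sphere. -/
noncomputable def gaussEnergy (t : ℝ) {m : ℕ} (μ : Measure (Sph m)) : ℝ :=
  ∫ u, ∫ v, Real.exp (-t * ‖(u : Euc m) - (v : Euc m)‖ ^ 2) ∂μ ∂μ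

/-- Confluent hypergeometric limit function `₀F₁(; α; z) = Σ_n zⁿ/((α)_n n!)`. -/
noncomputable def hyp0F1 (α z : ℝ) : ℝ :=
  ∑' k : ℕ, z ^ k / ((ascPochhammer ℝ k).eval α * (Nat.factorial k : ℝ))

/-!
Expanding the square `‖φ_μ - φ_ν‖²` of the difference of two characteristic functions and
integrating against a Gaussian whose own characteristic function is `exp(-t‖x‖²)` gives
`I(μ, μ) - 2 I(μ, ν) + I(ν, ν)`, where `I` is the mutual Gaussian energy. The uniform
measure `σ` has constant potential `c` on the sphere, so `I(μ, σ) = I(σ, σ) = c` and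
`I(μ, μ) - c = ∫ ‖φ_μ - φ_σ‖²`. This is nonnegative, and it vanishes only if `φ_μ = φ_σ`, that is
`μ = σ`.

To evaluate `c`, let `X` be a standard Gaussian vector of dimension `N` and `u` a unit vector. In
polar coordinates `E⟨u, X⟩ⁿ` is the mean of `⟨u, ·⟩ⁿ` over the sphere times `E‖X‖ⁿ`. Since `⟨u, X⟩`
is a one-dimensional standard Gaussian and `E‖X‖²ᵏ = 2ᵏ (N/2)_k`, the even moments of `⟨u, ·⟩` over
the sphere are `(1/2)_k / (N/2)_k` and the odd ones vanish. Summing the exponential series gives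
`₀F₁(; N/2; t²)` as the mean of `exp(2t⟨u, ·⟩)`.
-/

open ProbabilityTheory Module
open scoped ComplexConjugate Nat

lemma Gamma_add_natCast {a : ℝ} (ha : 0 < a) (k : ℕ) :
    Gamma (a + k) = (ascPochhammer ℝ k).eval a * Gamma a := by
  induction k with
  | zero => simp
  | succ k ih =>
    rw [Nat.cast_succ, ← add_assoc, Gamma_add_one (by positivity), ih, ascPochhammer_succ_eval]
    ring

lemma factorial_two_mul_eq_ascPochhammer (k : ℕ) :
    ((2 * k)! : ℝ) = 4 ^ k * k ! * (ascPochhammer ℝ k).eval (1 / 2) := by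
  induction k with
  | zero => simp
  | succ k ih =>
    rw [mul_add_one, Nat.factorial_succ, Nat.factorial_succ, Nat.factorial_succ,
      ascPochhammer_succ_eval]
    push_cast
    rw [ih]
    ring

lemma integral_eq_zero_of_odd {G F : Type*} [AddGroup G] [MeasurableSpace G] [MeasurableNeg G]
    [NormedAddCommGroup F] [NormedSpace ℝ F] {μ : Measure G} [μ.IsNegInvariant] {f : G → F}
    (hf : f.Odd) : ∫ x, f x ∂μ = 0 := by
  have h := integral_neg_eq_self f μ
  simp only [hf _, integral_neg] at h
  have : IsAddTorsionFree F := .of_isTorsionFree ℝ F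
  exact self_eq_neg.1 h.symm

lemma hasSum_integral_exp_mul {α : Type*} [MeasurableSpace α] {μ : Measure α} [IsFiniteMeasure μ]
    {f : α → ℝ} (hf : AEStronglyMeasurable f μ) {C : ℝ} (hC : ∀ᵐ x ∂μ, |f x| ≤ C) (s : ℝ) :
    HasSum (fun n : ℕ ↦ s ^ n / n ! * ∫ x, f x ^ n ∂μ) (∫ x, rexp (s * f x) ∂μ) := by
  simp only [← integral_const_mul]
  refine hasSum_integral_of_dominated_convergence (fun n _ ↦ (|s| * C) ^ n / n !)
    (fun n ↦ (hf.pow n).const_mul _) (fun n ↦ ?_)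
    (ae_of_all _ fun _ ↦ Real.summable_pow_div_factorial _) (integrable_const _)
    (ae_of_all _ fun x ↦ ?_)
  · filter_upwards [hC] with x hx
    rw [div_mul_eq_mul_div, ← mul_pow, norm_div, norm_pow, norm_mul, Real.norm_natCast,
      Real.norm_eq_abs, Real.norm_eq_abs]
    gcongr
  · simp only [div_mul_eq_mul_div, ← mul_pow, Real.exp_eq_exp_ℝ]
    exact NormedSpace.expSeries_div_hasSum_exp _

section Polar

variable {E : Type*} [NormedAddCommGroup E] [NormedSpace ℝ E] [FiniteDimensional ℝ E]
  [Nontrivial E] [MeasurableSpace E] [BorelSpace E] (μ : Measure E) [μ.IsAddHaarMeasure]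

instance neZero_toSphere : NeZero μ.toSphere := ⟨μ.toSphere_ne_zero⟩

lemma integral_volumeIoiPow (n : ℕ) (g : ℝ → ℝ) :
    ∫ r : Set.Ioi (0 : ℝ), g r ∂.volumeIoiPow n = ∫ r in Set.Ioi (0 : ℝ), r ^ n * g r := by
  rw [Measure.volumeIoiPow, integral_withDensity_eq_integral_toReal_smul (by fun_prop) (by simp),
    ← integral_subtype_comap measurableSet_Ioi fun r : ℝ ↦ r ^ n * g r]
  refine integral_congr_ae (ae_of_all _ fun r ↦ ?_)
  simp only [ENNReal.toReal_ofReal (pow_nonneg r.2.out.le n), smul_eq_mul]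

lemma integral_homogeneous_mul_fun_norm {n : ℕ} {f : E → ℝ}
    (hf : ∀ r : ℝ, 0 < r → ∀ x, f (r • x) = r ^ n * f x) (g : ℝ → ℝ) :
    ∫ x, f x * g ‖x‖ ∂μ =
      (∫ v : sphere (0 : E) 1, f v ∂μ.toSphere) *
        ∫ r in Set.Ioi (0 : ℝ), r ^ (finrank ℝ E - 1) * (r ^ n * g r) :=
  calc
    ∫ x, f x * g ‖x‖ ∂μ
      = ∫ x : ({0}ᶜ : Set E), f x * g ‖(x : E)‖ ∂(μ.comap (↑)) := by
      rw [integral_subtype_comap (measurableSet_singleton _).compl fun x ↦ f x * g ‖x‖,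
        restrict_compl_singleton]
    _ = ∫ p, f p.1 * ((p.2 : ℝ) ^ n * g p.2)
          ∂μ.toSphere.prod (.volumeIoiPow (finrank ℝ E - 1)) := by
      rw [← μ.measurePreserving_homeomorphUnitSphereProd.integral_comp
        (Homeomorph.measurableEmbedding _)]
      refine integral_congr_ae (ae_of_all _ fun x ↦ ?_)
      have hx : 0 < ‖(x : E)‖ := norm_pos_iff.2 x.2
      simp only [homeomorphUnitSphereProd_apply_fst_coe, homeomorphUnitSphereProd_apply_snd_coe,
        hf _ (inv_pos.2 hx), inv_pow]
      field_simp
    _ = (∫ v : sphere (0 : E) 1, f v ∂μ.toSphere) *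
          ∫ r : Set.Ioi (0 : ℝ), (r : ℝ) ^ n * g r ∂.volumeIoiPow (finrank ℝ E - 1) :=
      integral_prod_mul (fun v : sphere (0 : E) 1 ↦ f v) fun r : Set.Ioi (0 : ℝ) ↦
        (r : ℝ) ^ n * g r
    _ = _ := by rw [integral_volumeIoiPow _ fun r ↦ r ^ n * g r]

lemma integral_homogeneous_mul_fun_norm_eq_average_mul {n : ℕ} {f : E → ℝ}
    (hf : ∀ r : ℝ, 0 < r → ∀ x, f (r • x) = r ^ n * f x) (g : ℝ → ℝ) :
    ∫ x, f x * g ‖x‖ ∂μ =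
      (⨍ v : sphere (0 : E) 1, f v ∂μ.toSphere) * ∫ x, ‖x‖ ^ n * g ‖x‖ ∂μ := by
  have norm_homogeneous (r : ℝ) (hr : 0 < r) (x : E) : ‖r • x‖ ^ n = r ^ n * ‖x‖ ^ n := by
    rw [norm_smul_of_nonneg hr.le, mul_pow]
  have total_ne_zero : μ.toSphere.real Set.univ ≠ 0 := measureReal_univ_ne_zero
  rw [integral_homogeneous_mul_fun_norm μ hf, integral_homogeneous_mul_fun_norm μ norm_homogeneous,
    average_eq, smul_eq_mul]
  simp only [norm_eq_of_mem_sphere, one_pow, integral_const, smul_eq_mul, mul_one]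
  field_simp

end Polar

section StdGaussian

variable {E : Type*} [NormedAddCommGroup E] [InnerProductSpace ℝ E] [FiniteDimensional ℝ E]
  [MeasurableSpace E] [BorelSpace E]

lemma integrable_exp_neg_half_norm_sq :
    Integrable fun x : E ↦ rexp (-‖x‖ ^ 2 / 2) := by
  have h := GaussianFourier.integral_rexp_neg_mul_sq_norm (V := E) (b := 2⁻¹) (by norm_num)
  have h_ne : ∫ x : E, rexp (-2⁻¹ * ‖x‖ ^ 2) ≠ 0 := h.trans_ne (by positivity)
  refine (Integrable.of_integral_ne_zero h_ne).congr (ae_of_all _ fun x ↦ ?_)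
  ring_nf

lemma integral_exp_neg_half_norm_sq_mul_cexp_inner (w : E) :
    ∫ x : E, (rexp (-‖x‖ ^ 2 / 2) : ℂ) * Complex.exp (⟪x, w⟫ * Complex.I) =
      ((2 * π) ^ (finrank ℝ E / 2 : ℝ) : ℝ) * Complex.exp (-‖w‖ ^ 2 / 2) := by
  have h := GaussianFourier.integral_cexp_neg_mul_sq_norm_add (V := E) (b := 1 / 2)
    (by norm_num) Complex.I w
  rw [Complex.I_sq] at h
  rw [Complex.ofReal_cpow (by positivity)]
  convert h using 3 with x x
  · rw [Complex.ofReal_exp, ← Complex.exp_add, real_inner_comm]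
    congr 1
    push_cast
    ring
  · push_cast; ring
  · push_cast; ring
  · ring

lemma stdGaussian_eq_withDensity :
    stdGaussian E = volume.withDensity fun x ↦
      ENNReal.ofReal ((2 * π) ^ (-(finrank ℝ E / 2) : ℝ) * rexp (-‖x‖ ^ 2 / 2)) := by
  have := isFiniteMeasure_withDensity_ofReal
    ((integrable_exp_neg_half_norm_sq (E := E)).const_mul
      ((2 * π) ^ (-(finrank ℝ E / 2) : ℝ))).2
  refine Measure.ext_of_charFun (funext fun w ↦ ?_)
  rw [charFun_stdGaussian, charFun_apply,
    integral_withDensity_eq_integral_toReal_smul (by fun_prop) (by simp)]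
  have density_smul (x : E) :
      (ENNReal.ofReal ((2 * π) ^ (-(finrank ℝ E / 2) : ℝ) * rexp (-‖x‖ ^ 2 / 2))).toReal •
        Complex.exp (⟪x, w⟫ * Complex.I) =
      ((2 * π) ^ (-(finrank ℝ E / 2) : ℝ) : ℝ) *
        ((rexp (-‖x‖ ^ 2 / 2) : ℂ) * Complex.exp (⟪x, w⟫ * Complex.I)) := by
    rw [ENNReal.toReal_ofReal (by positivity), Complex.real_smul]
    push_cast
    ring
  simp only [density_smul]
  rw [integral_const_mul, integral_exp_neg_half_norm_sq_mul_cexp_inner, ← mul_assoc,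
    ← Complex.ofReal_mul, ← rpow_add (by positivity), neg_add_cancel, rpow_zero,
    Complex.ofReal_one, one_mul]

lemma integral_stdGaussian (f : E → ℝ) :
    ∫ x, f x ∂stdGaussian E =
      (2 * π) ^ (-(finrank ℝ E / 2) : ℝ) * ∫ x, f x * rexp (-‖x‖ ^ 2 / 2) := by
  rw [stdGaussian_eq_withDensity,
    integral_withDensity_eq_integral_toReal_smul (by fun_prop) (by simp), ← integral_const_mul]
  refine integral_congr_ae (ae_of_all _ fun x ↦ ?_)
  simp only [ENNReal.toReal_ofReal (mul_nonneg (rpow_nonneg two_pi_pos.le _) (exp_pos _).le),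
    smul_eq_mul]
  ring

instance isOpenPosMeasure_stdGaussian : (stdGaussian E).IsOpenPosMeasure := by
  rw [stdGaussian_eq_withDensity]
  refine (withDensity_absolutelyContinuous' (by fun_prop)
    (ae_of_all _ fun x ↦ ?_)).isOpenPosMeasure
  rw [ENNReal.ofReal_ne_zero_iff]
  positivity

lemma integral_homogeneous_stdGaussian [Nontrivial E] {n : ℕ} {f : E → ℝ}
    (hf : ∀ r : ℝ, 0 < r → ∀ x, f (r • x) = r ^ n * f x) :
    ∫ x, f x ∂stdGaussian E =
      (⨍ v : sphere (0 : E) 1, f v ∂(volume : Measure E).toSphere) *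
        ∫ x, ‖x‖ ^ n ∂stdGaussian E := by
  rw [integral_stdGaussian, integral_stdGaussian,
    integral_homogeneous_mul_fun_norm_eq_average_mul volume hf fun r ↦ rexp (-r ^ 2 / 2)]
  ring

lemma integral_pow_mul_exp_neg_half_sq (n : ℕ) :
    ∫ r in Set.Ioi (0 : ℝ), r ^ n * rexp (-r ^ 2 / 2) =
      2 ^ ((n + 1) / 2 : ℝ) / 2 * Gamma ((n + 1) / 2) := by
  have h := integral_rpow_mul_exp_neg_mul_rpow (p := 2) (q := n) (b := 2⁻¹) two_pos
    (neg_one_lt_zero.trans_le n.cast_nonneg) (by norm_num)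
  rw [inv_rpow zero_le_two, ← rpow_neg zero_le_two] at h
  simp only [rpow_natCast, rpow_ofNat] at h
  convert h using 3
  · ring_nf
  · ring_nf

lemma integral_norm_pow_mul_exp_neg_half_norm_sq [Nontrivial E] (n : ℕ) :
    ∫ x : E, ‖x‖ ^ n * rexp (-‖x‖ ^ 2 / 2) =
      finrank ℝ E * volume.real (ball (0 : E) 1) *
        (2 ^ ((finrank ℝ E + n) / 2 : ℝ) / 2 * Gamma ((finrank ℝ E + n) / 2)) := by
  have dim_pos : 0 < finrank ℝ E := finrank_pos
  have exponent : ((finrank ℝ E - 1 + n : ℕ) + 1 : ℝ) = finrank ℝ E + n := by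
    norm_cast
    omega
  have h := integral_fun_norm_addHaar (volume : Measure E) fun r ↦ r ^ n * rexp (-r ^ 2 / 2)
  simp only [smul_eq_mul, nsmul_eq_mul, ← mul_assoc, ← pow_add,
    integral_pow_mul_exp_neg_half_sq, exponent] at h
  rw [h, mul_assoc]

lemma integral_norm_pow_stdGaussian [Nontrivial E] (n : ℕ) :
    ∫ x, ‖x‖ ^ n ∂stdGaussian E =
      2 ^ (n / 2 : ℝ) * Gamma ((finrank ℝ E + n) / 2) / Gamma (finrank ℝ E / 2) := by
  have dim_pos : (0 : ℝ) < finrank ℝ E := Nat.cast_pos.2 finrank_pos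
  have Gamma_ne_zero : Gamma (finrank ℝ E / 2) ≠ 0 := (Gamma_pos_of_pos (by positivity)).ne'
  have total_mass : ∫ x, ‖x‖ ^ 0 ∂stdGaussian E = 1 := by simp
  rw [eq_div_iff Gamma_ne_zero, ← mul_one (2 ^ _ * _), ← total_mass]
  simp only [integral_stdGaussian, integral_norm_pow_mul_exp_neg_half_norm_sq, add_div,
    rpow_add two_pos, Nat.cast_zero, add_zero]
  ring

lemma integral_norm_pow_two_mul_stdGaussian [Nontrivial E] (k : ℕ) :
    ∫ x, ‖x‖ ^ (2 * k) ∂stdGaussian E = 2 ^ k * (ascPochhammer ℝ k).eval (finrank ℝ E / 2 : ℝ) := by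
  have half_dim_pos : (0 : ℝ) < finrank ℝ E / 2 := by
    have : 0 < finrank ℝ E := finrank_pos
    positivity
  have Gamma_ne_zero : Gamma (finrank ℝ E / 2) ≠ 0 := (Gamma_pos_of_pos half_dim_pos).ne'
  have half_two_mul : ((2 * k : ℕ) : ℝ) / 2 = k := by
    rw [Nat.cast_mul, Nat.cast_two, mul_div_cancel_left₀ _ two_ne_zero]
  rw [integral_norm_pow_stdGaussian, add_div, half_two_mul, rpow_natCast,
    Gamma_add_natCast half_dim_pos, ← mul_assoc, mul_div_cancel_right₀ _ Gamma_ne_zero]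

instance isNegInvariant_stdGaussian : (stdGaussian E).IsNegInvariant :=
  ⟨stdGaussian_map (LinearIsometryEquiv.neg ℝ)⟩

lemma stdGaussian_map_inner {u : E} (hu : ‖u‖ = 1) :
    (stdGaussian E).map (fun x ↦ ⟪u, x⟫) = stdGaussian ℝ := by
  have : IsProbabilityMeasure ((stdGaussian E).map fun x ↦ ⟪u, x⟫) :=
    Measure.isProbabilityMeasure_map (by fun_prop)
  refine Measure.ext_of_charFun (funext fun s ↦ ?_)
  have charFun_map_inner :
      charFun ((stdGaussian E).map fun x ↦ ⟪u, x⟫) s = charFun (stdGaussian E) (s • u) := by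
    rw [charFun_apply, charFun_apply, integral_map (by fun_prop) (by fun_prop)]
    simp [inner_smul_right, real_inner_comm]
  rw [charFun_map_inner, charFun_stdGaussian, charFun_stdGaussian, norm_smul, hu, mul_one]

end StdGaussian

section SphereAverage

variable {E : Type*} [NormedAddCommGroup E] [InnerProductSpace ℝ E] [FiniteDimensional ℝ E]
  [Nontrivial E] [MeasurableSpace E] [BorelSpace E] {u : E}

lemma average_inner_pow_mul_integral_norm_pow_stdGaussian (hu : ‖u‖ = 1) (n : ℕ) :
    (⨍ v : sphere (0 : E) 1, ⟪u, v⟫ ^ n ∂(volume : Measure E).toSphere) *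
        ∫ x, ‖x‖ ^ n ∂stdGaussian E =
      ∫ x, x ^ n ∂stdGaussian ℝ := by
  have homogeneous (r : ℝ) (_ : 0 < r) (x : E) : ⟪u, r • x⟫ ^ n = r ^ n * ⟪u, x⟫ ^ n := by
    rw [inner_smul_right, mul_pow]
  rw [← integral_homogeneous_stdGaussian (f := fun x ↦ ⟪u, x⟫ ^ n) homogeneous,
    ← stdGaussian_map_inner hu, integral_map (by fun_prop) (by fun_prop)]

lemma average_inner_pow_odd (hu : ‖u‖ = 1) {n : ℕ} (hn : Odd n) :
    ⨍ v : sphere (0 : E) 1, ⟪u, v⟫ ^ n ∂(volume : Measure E).toSphere = 0 := by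
  have dim_pos : (0 : ℝ) < finrank ℝ E := Nat.cast_pos.2 finrank_pos
  have norm_moment_ne_zero : ∫ x, ‖x‖ ^ n ∂stdGaussian E ≠ 0 := by
    have := Gamma_pos_of_pos (half_pos dim_pos)
    have : 0 < Gamma ((finrank ℝ E + n) / 2) := Gamma_pos_of_pos (by positivity)
    rw [integral_norm_pow_stdGaussian]
    positivity
  have h := average_inner_pow_mul_integral_norm_pow_stdGaussian hu n
  rw [integral_eq_zero_of_odd (f := fun x : ℝ ↦ x ^ n) hn.neg_pow] at h
  exact (mul_eq_zero.1 h).resolve_right norm_moment_ne_zero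

lemma average_inner_pow_two_mul (hu : ‖u‖ = 1) (k : ℕ) :
    ⨍ v : sphere (0 : E) 1, ⟪u, v⟫ ^ (2 * k) ∂(volume : Measure E).toSphere =
      (ascPochhammer ℝ k).eval (1 / 2) / (ascPochhammer ℝ k).eval (finrank ℝ E / 2 : ℝ) := by
  have dim_pos : (0 : ℝ) < finrank ℝ E := Nat.cast_pos.2 finrank_pos
  have eval_pos := ascPochhammer_pos k _ (half_pos dim_pos)
  have line_moment : ∫ x, x ^ (2 * k) ∂stdGaussian ℝ =
      2 ^ k * (ascPochhammer ℝ k).eval (1 / 2) := by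
    simpa [(even_two_mul k).pow_abs] using integral_norm_pow_two_mul_stdGaussian (E := ℝ) k
  have h := average_inner_pow_mul_integral_norm_pow_stdGaussian hu (2 * k)
  rw [integral_norm_pow_two_mul_stdGaussian, line_moment] at h
  rw [eq_div_iff eval_pos.ne']
  exact mul_left_cancel₀ (pow_ne_zero k two_ne_zero) (by linarith)

lemma average_exp_inner_eq_hyp0F1 (hu : ‖u‖ = 1) (t : ℝ) :
    ⨍ v : sphere (0 : E) 1, rexp (2 * t * ⟪u, v⟫) ∂(volume : Measure E).toSphere =
      hyp0F1 (finrank ℝ E / 2) (t ^ 2) := by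
  have inner_le_one (v : sphere (0 : E) 1) : |⟪u, v⟫| ≤ 1 := by
    simpa [hu] using abs_real_inner_le_norm u (v : E)
  have h : HasSum
      (fun n : ℕ ↦ (2 * t) ^ n / n ! *
        ⨍ v : sphere (0 : E) 1, ⟪u, v⟫ ^ n ∂(volume : Measure E).toSphere)
      (⨍ v : sphere (0 : E) 1, rexp (2 * t * ⟪u, v⟫) ∂(volume : Measure E).toSphere) :=
    hasSum_integral_exp_mul (by fun_prop) (ae_of_all _ inner_le_one) (2 * t)
  have odd_terms (n : ℕ) (hn : n ∉ Set.range (2 * ·)) : (2 * t) ^ n / n ! *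
      ⨍ v : sphere (0 : E) 1, ⟪u, v⟫ ^ n ∂(volume : Measure E).toSphere = 0 := by
    rw [range_two_mul] at hn
    rw [average_inner_pow_odd hu (Nat.not_even_iff_odd.1 hn), mul_zero]
  have even_term (k : ℕ) : (2 * t) ^ (2 * k) / (2 * k)! *
      ⨍ v : sphere (0 : E) 1, ⟪u, v⟫ ^ (2 * k) ∂(volume : Measure E).toSphere =
      (t ^ 2) ^ k / ((ascPochhammer ℝ k).eval (finrank ℝ E / 2 : ℝ) * k !) := by
    have := ascPochhammer_pos k (1 / 2 : ℝ) (by norm_num)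
    rw [average_inner_pow_two_mul hu, factorial_two_mul_eq_ascPochhammer, pow_mul, mul_pow, mul_pow]
    field_simp
    norm_num [mul_comm]
  rw [← (mul_right_injective₀ (two_ne_zero (α := ℕ))).hasSum_iff odd_terms] at h
  simp only [Function.comp_def, even_term] at h
  exact h.tsum_eq.symm

lemma average_exp_neg_mul_norm_sub_sq (u : sphere (0 : E) 1) (t : ℝ) :
    ⨍ v : sphere (0 : E) 1, rexp (-t * ‖(u : E) - v‖ ^ 2) ∂(volume : Measure E).toSphere =
      rexp (-2 * t) * hyp0F1 (finrank ℝ E / 2) (t ^ 2) := by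
  have kernel_eq (v : sphere (0 : E) 1) :
      rexp (-t * ‖(u : E) - v‖ ^ 2) = rexp (-2 * t) * rexp (2 * t * ⟪(u : E), v⟫) := by
    rw [← exp_add, norm_sub_sq_real, norm_eq_of_mem_sphere, norm_eq_of_mem_sphere]
    ring_nf
  rw [← average_exp_inner_eq_hyp0F1 (norm_eq_of_mem_sphere u), average, average,
    ← integral_const_mul]
  simp only [kernel_eq]

end SphereAverage

section CharFun

variable {E : Type*} [NormedAddCommGroup E] [InnerProductSpace ℝ E] [MeasurableSpace E]
  [BorelSpace E] [SecondCountableTopology E] (ρ μ ν : Measure E) [IsFiniteMeasure ρ]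
  [IsFiniteMeasure μ] [IsFiniteMeasure ν]

lemma integrable_charFun : Integrable (charFun μ) ρ :=
  .of_bound (by fun_prop) _ (ae_of_all _ norm_charFun_le)

lemma integral_charFun_comm : ∫ z, charFun μ z ∂ρ = ∫ x, charFun ρ x ∂μ := by
  simp only [charFun_apply]
  rw [integral_integral_swap]
  · simp only [real_inner_comm]
  · exact .of_bound (by fun_prop) 1 (ae_of_all _ fun p ↦ (Complex.norm_exp_ofReal_mul_I _).le)

lemma charFun_conv_map_neg (z : E) :
    charFun (μ ∗ ν.map Neg.neg) z = charFun μ z * conj (charFun ν z) := by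
  rw [charFun_conv, ← charFun_neg]
  simpa using congrArg (charFun μ z * ·) (charFun_map_smul (μ := ν) (-1) z)

lemma integrable_inner_charFun : Integrable (fun z ↦ ⟪charFun μ z, charFun ν z⟫) ρ := by
  refine (integrable_charFun ρ (ν ∗ μ.map Neg.neg)).re.congr (ae_of_all _ fun z ↦ ?_)
  simp only [charFun_conv_map_neg, Complex.inner, RCLike.re_eq_complex_re]

lemma integral_inner_charFun :
    ∫ z, ⟪charFun μ z, charFun ν z⟫ ∂ρ = ∫ x, ∫ y, (charFun ρ (x - y)).re ∂ν ∂μ := by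
  have neg_embedding : MeasurableEmbedding (Neg.neg : E → E) :=
    (MeasurableEquiv.neg E).measurableEmbedding
  have integrable_charFun_conv := integrable_charFun (μ ∗ ν.map Neg.neg) ρ
  calc
    ∫ z, ⟪charFun μ z, charFun ν z⟫ ∂ρ
      = (∫ z, charFun (μ ∗ ν.map Neg.neg) z ∂ρ).re := by
      rw [← RCLike.re_eq_complex_re, ← integral_re (integrable_charFun _ _)]
      simp only [charFun_conv_map_neg, real_inner_comm (charFun ν _), Complex.inner,
        RCLike.re_eq_complex_re]
    _ = ∫ x, (charFun ρ x).re ∂(μ ∗ ν.map Neg.neg) := by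
      rw [integral_charFun_comm]
      exact (integral_re integrable_charFun_conv).symm
    _ = ∫ x, ∫ y, (charFun ρ (x + y)).re ∂ν.map Neg.neg ∂μ :=
      integral_conv integrable_charFun_conv.re
    _ = ∫ x, ∫ y, (charFun ρ (x - y)).re ∂ν ∂μ := by
      simp only [neg_embedding.integral_map, sub_eq_add_neg]

lemma integral_norm_charFun_sub_sq_eq_zero_iff [CompleteSpace E] [ρ.IsOpenPosMeasure] :
    ∫ z, ‖charFun μ z - charFun ν z‖ ^ 2 ∂ρ = 0 ↔ μ = ν := by
  refine ⟨fun h ↦ ?_, fun h ↦ by simp [h]⟩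
  have bound (z : E) :
      ‖‖charFun μ z - charFun ν z‖ ^ 2‖ ≤ (μ.real Set.univ + ν.real Set.univ) ^ 2 := by
    rw [norm_pow, norm_norm]
    gcongr
    exact (norm_sub_le _ _).trans (add_le_add (norm_charFun_le z) (norm_charFun_le z))
  rw [integral_eq_zero_iff_of_nonneg (fun z ↦ by positivity)
    (.of_bound (by fun_prop) _ (ae_of_all _ bound))] at h
  have charFun_ae_eq : charFun μ =ᵐ[ρ] charFun ν := by
    filter_upwards [h] with z hz
    simpa [sub_eq_zero] using hz
  exact Measure.ext_of_charFun
    ((continuous_charFun.ae_eq_iff_eq _ continuous_charFun).1 charFun_ae_eq)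

end CharFun

section GaussInteraction

variable {E : Type*} [NormedAddCommGroup E] [MeasurableSpace E]

/-- The mutual energy `∫∫ exp(-t‖x - y‖²) dν(y) dμ(x)` of two measures, the symmetric bilinear form
whose diagonal is the Gaussian energy. -/
def gaussInteraction (t : ℝ) (μ ν : Measure E) : ℝ :=
  ∫ x, ∫ y, rexp (-t * ‖x - y‖ ^ 2) ∂ν ∂μ

lemma gaussInteraction_map {X : Type*} [MeasurableSpace X] {f : X → E} (hf : MeasurableEmbedding f)
    (t : ℝ) (μ ν : Measure X) :
    gaussInteraction t (μ.map f) (ν.map f) =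
      ∫ u, ∫ v, rexp (-t * ‖f u - f v‖ ^ 2) ∂ν ∂μ := by
  simp only [gaussInteraction, hf.integral_map]

variable [InnerProductSpace ℝ E] [FiniteDimensional ℝ E] [BorelSpace E] {t : ℝ}

variable (E t) in
/-- The centred Gaussian measure on `E` with covariance `2t • id`, where `0 ≤ t`; the scaling is
chosen so that its characteristic function is the kernel `x ↦ exp(-t‖x‖²)`. For `t < 0` it is the
Dirac measure at `0`, since then `√(2 * t) = 0`. -/
def scaledGaussian : Measure E := (stdGaussian E).map (√(2 * t) • ·)

instance : IsProbabilityMeasure (scaledGaussian E t) :=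
  Measure.isProbabilityMeasure_map (by fun_prop)

lemma isOpenPosMeasure_scaledGaussian (ht : 0 < t) : (scaledGaussian E t).IsOpenPosMeasure :=
  (continuous_const_smul _).isOpenPosMeasure_map
    (Homeomorph.smulOfNeZero √(2 * t) (by positivity)).surjective

lemma charFun_scaledGaussian (ht : 0 ≤ t) (x : E) :
    charFun (scaledGaussian E t) x = rexp (-t * ‖x‖ ^ 2) := by
  rw [scaledGaussian, charFun_map_smul, charFun_stdGaussian, norm_smul, mul_comm,
    Real.norm_of_nonneg (sqrt_nonneg _)]
  norm_cast
  rw [mul_pow, sq_sqrt (by positivity)]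
  ring_nf

variable (μ ν : Measure E) [IsFiniteMeasure μ] [IsFiniteMeasure ν]

lemma integral_inner_charFun_scaledGaussian (ht : 0 ≤ t) :
    ∫ z, ⟪charFun μ z, charFun ν z⟫ ∂scaledGaussian E t = gaussInteraction t μ ν := by
  simp only [integral_inner_charFun, charFun_scaledGaussian ht, Complex.ofReal_re,
    gaussInteraction]

lemma integral_norm_charFun_sub_sq_scaledGaussian (ht : 0 ≤ t) :
    ∫ z, ‖charFun μ z - charFun ν z‖ ^ 2 ∂scaledGaussian E t =
      gaussInteraction t μ μ - 2 * gaussInteraction t μ ν + gaussInteraction t ν ν := by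
  have integrable := integrable_inner_charFun (scaledGaussian E t)
  have expand (z : E) : ‖charFun μ z - charFun ν z‖ ^ 2 =
      ⟪charFun μ z, charFun μ z⟫ - 2 * ⟪charFun μ z, charFun ν z⟫ +
        ⟪charFun ν z, charFun ν z⟫ := by
    rw [norm_sub_sq_real, real_inner_self_eq_norm_sq, real_inner_self_eq_norm_sq]
  simp only [expand, ← integral_inner_charFun_scaledGaussian _ _ ht]
  rw [← integral_const_mul, ← integral_sub (integrable μ μ) ((integrable μ ν).const_mul 2)]
  exact integral_add ((integrable μ μ).sub ((integrable μ ν).const_mul 2)) (integrable ν ν)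

variable {μ ν} in
theorem gaussInteraction_self_le_and_eq_iff (ht : 0 < t)
    (h : gaussInteraction t μ ν = gaussInteraction t ν ν) :
    gaussInteraction t ν ν ≤ gaussInteraction t μ μ ∧
      (gaussInteraction t μ μ = gaussInteraction t ν ν ↔ μ = ν) := by
  have := isOpenPosMeasure_scaledGaussian (E := E) ht
  have h_sub := integral_norm_charFun_sub_sq_scaledGaussian μ ν ht.le
  have h_nonneg : 0 ≤ ∫ z, ‖charFun μ z - charFun ν z‖ ^ 2 ∂scaledGaussian E t :=
    integral_nonneg fun z ↦ by positivity
  rw [← integral_norm_charFun_sub_sq_eq_zero_iff (scaledGaussian E t) μ ν]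
  constructor
  · linarith
  · constructor <;> intro <;> linarith

end GaussInteraction

instance isProbabilityMeasure_unifSphere (d : ℕ) : IsProbabilityMeasure (unifSphere (d + 1)) :=
  isProbabilityMeasureSMul

lemma integral_exp_neg_mul_norm_sub_sq_unifSphere {d : ℕ} (u : Sph (d + 1)) (t : ℝ) :
    ∫ v : Sph (d + 1), rexp (-t * ‖(u : Euc (d + 1)) - v‖ ^ 2) ∂unifSphere (d + 1) =
      rexp (-2 * t) * hyp0F1 (((d : ℝ) + 1) / 2) (t ^ 2) := by
  simpa [average, unifSphere] using average_exp_neg_mul_norm_sub_sq u t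

/-- For `d ≥ 1`, `t > 0`, every Borel probability measure `μ` on `S^d` has
Gaussian energy at least `e^{−2t}·₀F₁(;(d+1)/2;t²)`, with equality iff `μ = σ_d`. -/
theorem gaussEnergy_ge_hyp0F1 (d : ℕ) (hd : 1 ≤ d) (t : ℝ) (ht : 0 < t)
    (μ : Measure (Sph (d + 1))) [IsProbabilityMeasure μ] :
    Real.exp (-2 * t) * hyp0F1 (((d : ℝ) + 1) / 2) (t ^ 2) ≤ gaussEnergy t μ ∧
      (gaussEnergy t μ = Real.exp (-2 * t) * hyp0F1 (((d : ℝ) + 1) / 2) (t ^ 2) ↔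
        μ = unifSphere (d + 1)) := by
  have coe_embedding : MeasurableEmbedding ((↑) : Sph (d + 1) → Euc (d + 1)) :=
    .subtype_coe isClosed_sphere.measurableSet
  have interaction_unifSphere (ν : Measure (Sph (d + 1))) [IsProbabilityMeasure ν] :
      gaussInteraction t (ν.map Subtype.val) ((unifSphere (d + 1)).map Subtype.val) =
        Real.exp (-2 * t) * hyp0F1 (((d : ℝ) + 1) / 2) (t ^ 2) := by
    simp only [gaussInteraction_map coe_embedding, integral_exp_neg_mul_norm_sub_sq_unifSphere,
      integral_const, probReal_univ, one_smul]
  have h := gaussInteraction_self_le_and_eq_iff ht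
    ((interaction_unifSphere μ).trans (interaction_unifSphere (unifSphere (d + 1))).symm)
  rwa [interaction_unifSphere, gaussInteraction_map coe_embedding,
    coe_embedding.map_injective.eq_iff] at h
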